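/- arXiv:1308.4631 — 3 statements merged into one kernel-verified Lean document; each statement's English description precedes it below -/
import Mathlib

section
/- Let n ≥ 2, λ ∈ ℝ^n, I an open interval, and let x^m_i : I → ℝ (1 ≤ i ≤ m ≤ n) be differentiable functions satisfying the system (dyn) such that the triangle X(t) = (x^m_i(t)) belongs to T_λ for every t ∈ I. Then the matrix-valued function M(t) := g_λ(X(t)) is differentiable on I and satisfies the Lax equation M'(t) = M(t)·Q(t) − Q(t)·M(t), where Q(t) = Π_−(M(t)) is the strictly lower triangular part of M(t). -/
/-- The triangle `X = (x^m_i)` (1-based, `1 ≤ i ≤ m ≤ n`) belongs to `T_λ`. -/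
noncomputable def inTlam (n : ℕ) (lam : ℕ → ℝ) (X : ℕ → ℕ → ℝ) : Prop :=
  ∀ m i, 1 ≤ i → i ≤ m → m < n →
    lam m + (if i < m then
        Real.exp (X (m + 1) (i + 1) - X m i) + Real.exp (X (m - 1) i - X m i)
      else Real.exp (X (m + 1) (m + 1) - X m m)) =
    lam (m + 1) + (if 1 < i then
        Real.exp (X m i - X (m + 1) i) + Real.exp (X m i - X (m - 1) (i - 1))
      else Real.exp (X m 1 - X (m + 1) 1))

/-- `g_λ(X)`: the tridiagonal (Lax) matrix (Lean row `i` is row `i+1` of the paper). -/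
noncomputable def gmat (n : ℕ) (lam : ℕ → ℝ) (X : ℕ → ℕ → ℝ) : Matrix (Fin n) (Fin n) ℝ :=
  Matrix.of fun i j : Fin n =>
    if (j : ℕ) = (i : ℕ) + 1 then 1
    else if (i : ℕ) = (j : ℕ) + 1 then -Real.exp (X n ((i : ℕ) + 1) - X n (i : ℕ))
    else if i = j then
      (if (i : ℕ) = 0 then lam n + Real.exp (X (n - 1) 1 - X n 1)
       else if (i : ℕ) = n - 1 then lam n - Real.exp (X n n - X (n - 1) (n - 1))
       else lam n + Real.exp (X (n - 1) ((i : ℕ) + 1) - X n ((i : ℕ) + 1))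
         - Real.exp (X n ((i : ℕ) + 1) - X (n - 1) (i : ℕ)))
    else 0

/-- `Π₋(A)`: the strictly lower triangular part of `A`. -/
def lowerPart {n : ℕ} (A : Matrix (Fin n) (Fin n) ℝ) : Matrix (Fin n) (Fin n) ℝ :=
  Matrix.of fun i j : Fin n => if j < i then A i j else 0

/-!
Put `α i = e^{x^{n-1}_i - x^n_i}` and `β i = e^{x^n_{i+1} - x^{n-1}_i}`, with value `0` at `i = 0`
and `i = n`. The dynamics of row `n` is `(x^n_{i+1})' = λ_n + α (i+1) - β i`, and the relations
defining `T_λ` at level `n - 1` turn the dynamics of row `n - 1` into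
`(x^{n-1}_i)' = λ_n + α i - β i`. Subtracting, `α` and `β` solve the Volterra lattice
`α (i+1)' = α (i+1) (β i - β (i+1))`, `β i' = β i (α (i+1) - α i)`. The matrix `g_λ(X)` has diagonal
`d i = λ_n + α (i+1) - β i`, subdiagonal `s i = -α i β i` and superdiagonal `1`, so the Volterra
lattice gives the Toda lattice `d i' = s (i+1) - s i`, `s i' = s i (d i - d (i-1))`. The Lax
equation is its matrix form: the commutator of `g_λ(X)` with its strictly lower part `Q` is that of
its shift-plus-diagonal part with `Q`.
-/

section Matrices

variable {R : Type*} {n : ℕ}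

/-- The shift matrix, with ones on the superdiagonal; it is the part of `g_λ(X)` above the
diagonal. -/
def superShift (n : ℕ) (R : Type*) [Zero R] [One R] : Matrix (Fin n) (Fin n) R :=
  Matrix.of fun i j => if (j : ℕ) = (i : ℕ) + 1 then 1 else 0

/-- The matrix supported on the subdiagonal with entry `s i` in row `i`. The values `s 0` and `s n`
do not occur as entries; requiring them to vanish encodes the boundary conditions of the Toda
lattice. -/
def subdiagonal (n : ℕ) [Zero R] (s : ℕ → R) : Matrix (Fin n) (Fin n) R :=
  Matrix.of fun i j => if (i : ℕ) = (j : ℕ) + 1 then s i else 0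

/-- The Lax matrix of the Toda lattice: tridiagonal, with diagonal `d`, subdiagonal `s` (indexed by
the row) and ones on the superdiagonal. -/
def todaMatrix (n : ℕ) [AddMonoidWithOne R] (d s : ℕ → R) : Matrix (Fin n) (Fin n) R :=
  superShift n R + Matrix.diagonal (fun i : Fin n => d i) + subdiagonal n s

theorem superShift_mul_subdiagonal [NonAssocSemiring R] {s : ℕ → R} (hs : s n = 0) :
    superShift n R * subdiagonal n s = Matrix.diagonal fun i : Fin n => s (i + 1) := by
  ext i j
  simp only [Matrix.mul_apply, superShift, subdiagonal, Matrix.of_apply, ite_mul, one_mul, zero_mul]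
  by_cases hi : (i : ℕ) + 1 < n
  · rw [Finset.sum_eq_single ⟨i + 1, hi⟩ (fun k _ hk => if_neg fun h => hk (Fin.ext h)) (by simp)]
    simp [Matrix.diagonal_apply, Fin.ext_iff]
  · have hin : (i : ℕ) + 1 = n := by omega
    rw [Finset.sum_eq_zero fun k _ => if_neg (by omega)]
    simp [Matrix.diagonal_apply, hin, hs]

theorem subdiagonal_mul_superShift [NonAssocSemiring R] {s : ℕ → R} (hs : s 0 = 0) :
    subdiagonal n s * superShift n R = Matrix.diagonal fun i : Fin n => s i := by
  ext ⟨i, hi⟩ j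
  simp only [Matrix.mul_apply, superShift, subdiagonal, Matrix.of_apply, ite_mul, zero_mul]
  cases i with
  | zero => simp [Matrix.diagonal_apply, hs]
  | succ i =>
    rw [Finset.sum_eq_single ⟨i, by omega⟩
      (fun k _ hk => if_neg fun h => hk (Fin.ext (by simp only at h ⊢; omega))) (by simp)]
    simp [Matrix.diagonal_apply, Fin.ext_iff, eq_comm]

theorem diagonal_mul_subdiagonal_sub [CommRing R] (d s : ℕ → R) :
    Matrix.diagonal (fun i : Fin n => d i) * subdiagonal n s -
        subdiagonal n s * Matrix.diagonal (fun i : Fin n => d i) =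
      subdiagonal n fun i => s i * (d i - d (i - 1)) := by
  ext i j
  simp only [subdiagonal, Matrix.sub_apply, Matrix.diagonal_mul, Matrix.mul_diagonal,
    Matrix.of_apply]
  split_ifs with h
  · rw [h, Nat.add_sub_cancel]
    ring
  · ring

theorem lowerPart_todaMatrix (d s : ℕ → ℝ) : lowerPart (todaMatrix n d s) = subdiagonal n s := by
  ext i j
  simp only [lowerPart, todaMatrix, superShift, subdiagonal, Matrix.of_apply, Matrix.add_apply,
    Matrix.diagonal_apply, Fin.lt_def, Fin.ext_iff]
  split_ifs <;> first | omega | simp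

theorem todaMatrix_mul_lowerPart_sub {d s : ℕ → ℝ} (hs₀ : s 0 = 0) (hsn : s n = 0) :
    todaMatrix n d s * lowerPart (todaMatrix n d s) -
        lowerPart (todaMatrix n d s) * todaMatrix n d s =
      Matrix.diagonal (fun i : Fin n => s (i + 1) - s i) +
        subdiagonal n fun i => s i * (d i - d (i - 1)) := by
  rw [lowerPart_todaMatrix, ← diagonal_mul_subdiagonal_sub, ← Matrix.diagonal_sub,
    ← superShift_mul_subdiagonal hsn, ← subdiagonal_mul_superShift hs₀, todaMatrix]
  noncomm_ring

end Matrices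

section Entries

variable {𝕜 E : Type*} [NontriviallyNormedField 𝕜] [NormedAddCommGroup E] [NormedSpace 𝕜 E] {t : 𝕜}

theorem hasDerivAt_diagonal_apply {ι : Type*} [DecidableEq ι] {d : ι → 𝕜 → E} {d' : ι → E}
    (hd : ∀ i, HasDerivAt (d i) (d' i) t) (p q : ι) :
    HasDerivAt (fun u => Matrix.diagonal (fun i => d i u) p q) (Matrix.diagonal d' p q) t := by
  simp only [Matrix.diagonal_apply]
  split_ifs
  · exact hd p
  · exact hasDerivAt_const t 0

theorem hasDerivAt_subdiagonal_apply {n : ℕ} {s : ℕ → 𝕜 → E} {s' : ℕ → E}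
    (hs : ∀ i, i + 1 < n → HasDerivAt (s (i + 1)) (s' (i + 1)) t) (p q : Fin n) :
    HasDerivAt (fun u => subdiagonal n (fun i => s i u) p q) (subdiagonal n s' p q) t := by
  simp only [subdiagonal, Matrix.of_apply]
  split_ifs with h
  · rw [h]
    exact hs q (h ▸ p.2)
  · exact hasDerivAt_const t 0

end Entries

section Lattices

variable {n : ℕ} {t : ℝ}

theorem hasDerivAt_todaMatrix_of_toda {d s : ℕ → ℝ → ℝ}
    (hd : ∀ i < n, HasDerivAt (d i) (s (i + 1) t - s i t) t)
    (hs : ∀ i, i + 1 < n → HasDerivAt (s (i + 1)) (s (i + 1) t * (d (i + 1) t - d i t)) t)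
    (hs₀ : s 0 t = 0) (hsn : s n t = 0) (p q : Fin n) :
    let M : ℝ → Matrix (Fin n) (Fin n) ℝ := fun u => todaMatrix n (fun i => d i u) (fun i => s i u)
    HasDerivAt (fun u => M u p q) ((M t * lowerPart (M t) - lowerPart (M t) * M t) p q) t := by
  intro M
  rw [todaMatrix_mul_lowerPart_sub hs₀ hsn]
  have hdiag := hasDerivAt_diagonal_apply (fun i : Fin n => hd i i.2) p q
  have hsub := hasDerivAt_subdiagonal_apply
    (s' := fun i => s i t * (d i t - d (i - 1) t)) hs p q
  exact (hdiag.const_add (superShift n ℝ p q)).add hsub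

theorem hasDerivAt_todaMatrix_of_volterra {α β : ℕ → ℝ → ℝ} (c : ℝ)
    (hα : ∀ i < n, HasDerivAt (α (i + 1)) (α (i + 1) t * (β i t - β (i + 1) t)) t)
    (hβ : ∀ i < n, HasDerivAt (β i) (β i t * (α (i + 1) t - α i t)) t)
    (hβ₀ : β 0 t = 0) (hαn : α n t = 0) (p q : Fin n) :
    let M : ℝ → Matrix (Fin n) (Fin n) ℝ := fun u =>
      todaMatrix n (fun i => c + α (i + 1) u - β i u) (fun i => -(α i u * β i u))
    HasDerivAt (fun u => M u p q) ((M t * lowerPart (M t) - lowerPart (M t) * M t) p q) t := by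
  refine hasDerivAt_todaMatrix_of_toda (d := fun i u => c + α (i + 1) u - β i u)
    (s := fun i u => -(α i u * β i u)) (fun i hi => ?_) (fun i hi => ?_)
    (by simp [hβ₀]) (by simp [hαn]) p q
  · refine (((hα i hi).const_add c).sub (hβ i hi)).congr_deriv ?_
    ring
  · refine ((hα i (by omega)).mul (hβ (i + 1) hi)).neg.congr_deriv ?_
    ring

end Lattices

section Triangles

/-- The weight `e^{x^{m-1}_i - x^m_i}` of the term of (dyn) by which `x^{m-1}_i` pushes `x^m_i`
upwards; it is `0` when `x^{m-1}_i` lies outside the triangle. -/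
noncomputable def pushWeight (m : ℕ) (X : ℕ → ℕ → ℝ) (i : ℕ) : ℝ :=
  if 0 < i ∧ i < m then Real.exp (X (m - 1) i - X m i) else 0

/-- The weight `e^{x^m_{i+1} - x^{m-1}_i}` of the term of (dyn) by which `x^{m-1}_i` pulls
`x^m_{i+1}` downwards; it is `0` when `x^{m-1}_i` lies outside the triangle. -/
noncomputable def pullWeight (m : ℕ) (X : ℕ → ℕ → ℝ) (i : ℕ) : ℝ :=
  if 0 < i ∧ i < m then Real.exp (X m (i + 1) - X (m - 1) i) else 0

/-- Row `m` of the system (dyn) at time `t`, where `i` stands for the index `i + 1` of the paper.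
The vanishing of the weights outside the triangle merges the boundary cases into one formula. -/
def DynRowAt (lam : ℕ → ℝ) (x : ℕ → ℕ → ℝ → ℝ) (m : ℕ) (t : ℝ) : Prop :=
  ∀ i < m, HasDerivAt (x m (i + 1))
    (lam m + pushWeight m (fun k j => x k j t) (i + 1) - pullWeight m (fun k j => x k j t) i) t

/-- The relations `λ_m + l^m_i = λ_{m+1} + r^m_i` of `T_λ` for one level `m`, where `i` stands for
the index `i + 1` of the paper. -/
def TlamLevel (lam : ℕ → ℝ) (X : ℕ → ℕ → ℝ) (m : ℕ) : Prop :=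
  ∀ i < m, lam m + (pullWeight (m + 1) X (i + 1) + pushWeight m X (i + 1)) =
    lam (m + 1) + (pushWeight (m + 1) X (i + 1) + pullWeight m X i)

variable {m n : ℕ} {lam : ℕ → ℝ} {X : ℕ → ℕ → ℝ} {x : ℕ → ℕ → ℝ → ℝ} {t : ℝ}

theorem pushWeight_mul_pullWeight {i : ℕ} (hi : 0 < i) (him : i < m) :
    pushWeight m X i * pullWeight m X i = Real.exp (X m (i + 1) - X m i) := by
  rw [pushWeight, pullWeight, if_pos ⟨hi, him⟩, if_pos ⟨hi, him⟩, ← Real.exp_add]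
  congr 1
  ring

theorem gmat_eq_todaMatrix (hn : 2 ≤ n) (lam : ℕ → ℝ) (X : ℕ → ℕ → ℝ) :
    gmat n lam X = todaMatrix n (fun i => lam n + pushWeight n X (i + 1) - pullWeight n X i)
      (fun i => -(pushWeight n X i * pullWeight n X i)) := by
  ext i j
  simp only [gmat, todaMatrix, superShift, subdiagonal, Matrix.of_apply, Matrix.add_apply,
    Matrix.diagonal_apply]
  by_cases hsup : (j : ℕ) = i + 1
  · have hij : i ≠ j := fun h => by omega
    simp [hsup, hij, add_assoc]
  by_cases hsub : (i : ℕ) = j + 1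
  · have hij : i ≠ j := fun h => by omega
    rw [if_neg hsup, if_pos hsub, if_neg hsup, if_neg hij, if_pos hsub,
      pushWeight_mul_pullWeight (by omega) i.2, zero_add, zero_add]
  by_cases hij : i = j
  · subst hij
    rw [if_neg hsup, if_neg hsub, if_pos rfl, if_neg hsup, if_pos rfl, if_neg hsub, zero_add,
      add_zero, pushWeight, pullWeight]
    split_ifs <;> first | omega | skip
    · simp [*]
    · have hi : (i : ℕ) + 1 = n := by omega
      simp [← hi]
    · rfl
  · simp [hsup, hsub, hij]

theorem inTlam.tlamLevel (hX : inTlam n lam X) (hm : m < n) : TlamLevel lam X m := by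
  intro i hi
  have h := hX m (i + 1) (by omega) hi hm
  have hpull : pullWeight (m + 1) X (i + 1) = Real.exp (X (m + 1) (i + 1 + 1) - X m (i + 1)) :=
    if_pos (by omega)
  have hpush : pushWeight (m + 1) X (i + 1) = Real.exp (X m (i + 1) - X (m + 1) (i + 1)) :=
    if_pos (by omega)
  have hleft : (if i + 1 < m then Real.exp (X (m + 1) (i + 1 + 1) - X m (i + 1)) +
        Real.exp (X (m - 1) (i + 1) - X m (i + 1))
      else Real.exp (X (m + 1) (m + 1) - X m m)) =
      pullWeight (m + 1) X (i + 1) + pushWeight m X (i + 1) := by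
    rw [hpull]
    by_cases hlast : i + 1 < m
    · simp [pushWeight, hlast]
    · obtain rfl : i + 1 = m := by omega
      simp [pushWeight]
  have hright : (if 1 < i + 1 then Real.exp (X m (i + 1) - X (m + 1) (i + 1)) +
        Real.exp (X m (i + 1) - X (m - 1) (i + 1 - 1))
      else Real.exp (X m 1 - X (m + 1) 1)) =
      pushWeight (m + 1) X (i + 1) + pullWeight m X i := by
    rw [hpush]
    by_cases hfirst : i = 0
    · simp [pullWeight, hfirst]
    · simp [pullWeight, hi, Nat.pos_of_ne_zero hfirst]
  rwa [hleft, hright] at h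

theorem dynRowAt_of_hasDerivAt (h11 : HasDerivAt (x 1 1) (lam 1) t)
    (h1 : 2 ≤ m → HasDerivAt (x m 1) (lam m + Real.exp (x (m - 1) 1 t - x m 1 t)) t)
    (hmm : 2 ≤ m → HasDerivAt (x m m) (lam m - Real.exp (x m m t - x (m - 1) (m - 1) t)) t)
    (hmi : ∀ i, 1 < i → i < m → HasDerivAt (x m i)
      (lam m + Real.exp (x (m - 1) i t - x m i t) - Real.exp (x m i t - x (m - 1) (i - 1) t)) t) :
    DynRowAt lam x m t := by
  intro i hi
  simp only [pushWeight, pullWeight]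
  by_cases hfirst : i = 0
  · subst hfirst
    by_cases hlast : m = 1
    · subst hlast
      simpa using h11
    · rw [if_pos (by omega), if_neg (by omega), sub_zero]
      exact h1 (by omega)
  · rw [if_pos (c := 0 < i ∧ i < m) (by omega)]
    by_cases hlast : i + 1 = m
    · subst hlast
      rw [if_neg (by omega), add_zero]
      exact hmm (by omega)
    · rw [if_pos (by omega)]
      exact hmi (i + 1) (by omega) (by omega)

theorem DynRowAt.hasDerivAt_of_tlamLevel (hrow : DynRowAt lam x m t)
    (hT : TlamLevel lam (fun k j => x k j t) m) {i : ℕ} (hi : i < m) :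
    HasDerivAt (x m (i + 1))
      (lam (m + 1) + pushWeight (m + 1) (fun k j => x k j t) (i + 1) -
        pullWeight (m + 1) (fun k j => x k j t) (i + 1)) t :=
  (hrow i hi).congr_deriv (by linarith [hT i hi])

theorem hasDerivAt_pushWeight (hrow : DynRowAt lam x m t) (hrow' : DynRowAt lam x (m + 1) t)
    (hT : TlamLevel lam (fun k j => x k j t) m) (i : ℕ) :
    HasDerivAt (fun u => pushWeight (m + 1) (fun k j => x k j u) (i + 1))
      (pushWeight (m + 1) (fun k j => x k j t) (i + 1) *
        (pullWeight (m + 1) (fun k j => x k j t) i -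
          pullWeight (m + 1) (fun k j => x k j t) (i + 1))) t := by
  by_cases hi : i < m
  · have hexp := ((hrow.hasDerivAt_of_tlamLevel hT hi).sub (hrow' i (by omega))).exp
    have hpush (u : ℝ) : pushWeight (m + 1) (fun k j => x k j u) (i + 1) =
        Real.exp (x m (i + 1) u - x (m + 1) (i + 1) u) := if_pos (by omega)
    rw [funext hpush]
    refine hexp.congr_deriv ?_
    rw [hpush]
    simp only [Pi.sub_apply]
    ring
  · have hpush (u : ℝ) : pushWeight (m + 1) (fun k j => x k j u) (i + 1) = 0 := if_neg (by omega)
    simpa only [hpush, zero_mul] using hasDerivAt_const t (0 : ℝ)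

theorem hasDerivAt_pullWeight (hrow : DynRowAt lam x m t) (hrow' : DynRowAt lam x (m + 1) t)
    (hT : TlamLevel lam (fun k j => x k j t) m) (i : ℕ) :
    HasDerivAt (fun u => pullWeight (m + 1) (fun k j => x k j u) i)
      (pullWeight (m + 1) (fun k j => x k j t) i *
        (pushWeight (m + 1) (fun k j => x k j t) (i + 1) -
          pushWeight (m + 1) (fun k j => x k j t) i)) t := by
  by_cases hi : 0 < i ∧ i < m + 1
  · obtain ⟨k, rfl⟩ := Nat.exists_eq_add_of_le' hi.1
    have hexp := ((hrow' (k + 1) hi.2).sub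
      (hrow.hasDerivAt_of_tlamLevel hT (Nat.lt_of_succ_lt_succ hi.2))).exp
    have hpull (u : ℝ) : pullWeight (m + 1) (fun k j => x k j u) (k + 1) =
        Real.exp (x (m + 1) (k + 1 + 1) u - x m (k + 1) u) := if_pos hi
    rw [funext hpull]
    refine hexp.congr_deriv ?_
    rw [hpull]
    simp only [Pi.sub_apply]
    ring
  · have hpull (u : ℝ) : pullWeight (m + 1) (fun k j => x k j u) i = 0 := if_neg hi
    simpa only [hpull, zero_mul] using hasDerivAt_const t (0 : ℝ)

end Triangles

theorem stmt10_general {m : ℕ} (hm : 0 < m) {lam : ℕ → ℝ} {x : ℕ → ℕ → ℝ → ℝ} {t : ℝ}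
    (hrow : DynRowAt lam x m t) (hrow' : DynRowAt lam x (m + 1) t)
    (hT : TlamLevel lam (fun k j => x k j t) m) (p q : Fin (m + 1)) :
    let M : ℝ → Matrix (Fin (m + 1)) (Fin (m + 1)) ℝ :=
      fun u => gmat (m + 1) lam fun k j => x k j u
    HasDerivAt (fun u => M u p q) ((M t * lowerPart (M t) - lowerPart (M t) * M t) p q) t := by
  simp only [gmat_eq_todaMatrix (Nat.succ_le_succ hm)]
  exact hasDerivAt_todaMatrix_of_volterra
    (α := fun i u => pushWeight (m + 1) (fun k j => x k j u) i)
    (β := fun i u => pullWeight (m + 1) (fun k j => x k j u) i) (lam (m + 1))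
    (fun i _ => hasDerivAt_pushWeight hrow hrow' hT i)
    (fun i _ => hasDerivAt_pullWeight hrow hrow' hT i) (if_neg (by simp)) (if_neg (by simp)) p q

/-- If a triangle evolves by (dyn) and stays in `T_λ` on an open
interval `I`, then `M(t) = g_λ(X(t))` satisfies the Lax equation `M' = [M, Π₋(M)]`. -/
theorem stmt10 (n : ℕ) (hn : 2 ≤ n) (lam : ℕ → ℝ) (a b : ℝ) (x : ℕ → ℕ → ℝ → ℝ)
    (h11 : ∀ t ∈ Set.Ioo a b, HasDerivAt (x 1 1) (lam 1) t)
    (h1 : ∀ m, 2 ≤ m → m ≤ n → ∀ t ∈ Set.Ioo a b,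
      HasDerivAt (x m 1) (lam m + Real.exp (x (m - 1) 1 t - x m 1 t)) t)
    (hmm : ∀ m, 2 ≤ m → m ≤ n → ∀ t ∈ Set.Ioo a b,
      HasDerivAt (x m m) (lam m - Real.exp (x m m t - x (m - 1) (m - 1) t)) t)
    (hmi : ∀ m i, 1 < i → i < m → m ≤ n → ∀ t ∈ Set.Ioo a b,
      HasDerivAt (x m i)
        (lam m + Real.exp (x (m - 1) i t - x m i t)
          - Real.exp (x m i t - x (m - 1) (i - 1) t)) t)
    (hT : ∀ t ∈ Set.Ioo a b, inTlam n lam (fun m i => x m i t)) :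
    ∀ t ∈ Set.Ioo a b, ∀ p q : Fin n,
      HasDerivAt (fun s => gmat n lam (fun m i => x m i s) p q)
        ((gmat n lam (fun m i => x m i t) * lowerPart (gmat n lam (fun m i => x m i t)) -
          lowerPart (gmat n lam (fun m i => x m i t)) * gmat n lam (fun m i => x m i t)) p q)
        t := by
  intro t ht
  obtain ⟨m, rfl⟩ := Nat.exists_eq_add_of_le' (one_le_two.trans hn)
  have hrow (k : ℕ) (hkm : k ≤ m + 1) : DynRowAt lam x k t :=
    dynRowAt_of_hasDerivAt (h11 t ht) (fun h => h1 k h hkm t ht) (fun h => hmm k h hkm t ht)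
      (fun i hi hik => hmi k i hi hik hkm t ht)
  exact stmt10_general (by omega) (hrow m m.le_succ) (hrow (m + 1) le_rfl)
    ((hT t ht).tlamLevel (by omega))
end

section
/- Let n ≥ 2, λ ∈ ℝ^n, and let X = (x^m_i) be a triangle of size n belonging to T_λ. Set v_1 = λ_n + e^{x^{n−1}_1−x^n_1}, v_n = λ_n − e^{x^n_n−x^{n−1}_{n−1}}, and v_i = λ_n + e^{x^{n−1}_i−x^n_i} − e^{x^n_i−x^{n−1}_{i−1}} for 1 < i < n. Then F(X) = Σ_{i=1}^n (n+1−2i)·v_i = (n−1)v_1 + (n−3)v_2 + ⋯ + (1−n)v_n. -/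
open Finset

section WeightedRows

variable {R : Type*} [CommRing R]

lemma sum_Icc_one_sub_two_mul (m : ℕ) (c : R) :
    ∑ i ∈ Icc 1 m, (c - 2 * (i : R)) = m * (c - m - 1) := by
  induction m with
  | zero => simp
  | succ m ih =>
    rw [sum_Icc_succ_top (by lia), ih]
    push_cast
    ring

lemma sum_Icc_one_antisymm_mul_const_add (m : ℕ) (c : R) (f : ℕ → R) :
    ∑ i ∈ Icc 1 m, ((m : R) + 1 - 2 * i) * (c + f i) =
      ∑ i ∈ Icc 1 m, ((m : R) + 1 - 2 * i) * f i := by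
  simp only [mul_add, sum_add_distrib, ← sum_mul, sum_Icc_one_sub_two_mul]
  ring

lemma sum_Icc_one_succ_mul_ite_lt (m : ℕ) (w b : ℕ → R) :
    ∑ i ∈ Icc 1 (m + 1), w i * (if i < m + 1 then b i else 0) = ∑ i ∈ Icc 1 m, w i * b i := by
  rw [sum_Icc_succ_top (by lia), if_neg (lt_irrefl _), mul_zero, add_zero]
  exact sum_congr rfl fun i hi ↦ by rw [if_pos (Nat.lt_succ_of_le (mem_Icc.1 hi).2)]

lemma sum_Icc_one_succ_mul_ite_one_lt (m : ℕ) (w a : ℕ → R) :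
    ∑ i ∈ Icc 1 (m + 1), w i * (if 1 < i then a (i - 1) else 0) =
      ∑ i ∈ Icc 1 m, w (i + 1) * a i := by
  induction m with
  | zero => simp
  | succ m ih => rw [sum_Icc_succ_top (by lia), ih, sum_Icc_succ_top (by lia)]; simp

lemma sum_Icc_one_succ_antisymm_mul (m : ℕ) (c : R) (a b : ℕ → R) :
    ∑ i ∈ Icc 1 (m + 1), (((m + 1 : ℕ) : R) + 1 - 2 * i) *
        (c + (if i < m + 1 then b i else 0) - (if 1 < i then a (i - 1) else 0)) =
      ∑ i ∈ Icc 1 m, ((m : R) + 1 - 2 * i) * (c + b i - a i) + ∑ i ∈ Icc 1 m, (a i + b i) := by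
  simp only [add_sub_assoc c, sum_Icc_one_antisymm_mul_const_add]
  simp only [mul_sub, sum_sub_distrib, sum_Icc_one_succ_mul_ite_lt,
    sum_Icc_one_succ_mul_ite_one_lt]
  simp only [← sum_sub_distrib, ← sum_add_distrib]
  refine sum_congr rfl fun i _ ↦ ?_
  push_cast
  ring

/-- The velocity of the `i`-th entry of row `m`, computed from the row above it, when the entries
`(m, i)` and `(m + 1, i + 1)` interact with weight `a m i` and the entries `(m, i)` and `(m + 1, i)`
with weight `b m i`. Rows are 1-based, so the `b`-term is missing for `i = m` and the `a`-term for
`i = 1`. -/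
def rowVelocity (lam : ℕ → R) (a b : ℕ → ℕ → R) (m i : ℕ) : R :=
  lam m + (if i < m then b (m - 1) i else 0) - (if 1 < i then a (m - 1) (i - 1) else 0)

theorem sum_weights_eq_sum_mul_rowVelocity {n : ℕ} {lam : ℕ → R} {a b : ℕ → ℕ → R}
    (h : ∀ m i, 1 ≤ i → i ≤ m → m < n →
      rowVelocity lam a b m i = lam (m + 1) + b m i - a m i) :
    ∑ m ∈ Ico 1 n, ∑ i ∈ Icc 1 m, (a m i + b m i) =
      ∑ i ∈ Icc 1 n, ((n : R) + 1 - 2 * i) * rowVelocity lam a b n i := by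
  induction n with
  | zero => simp
  | succ n ih =>
    have row_above : ∑ i ∈ Icc 1 n, ((n : R) + 1 - 2 * i) * rowVelocity lam a b n i =
        ∑ i ∈ Icc 1 n, ((n : R) + 1 - 2 * i) * (lam (n + 1) + b n i - a n i) :=
      sum_congr rfl fun i hi ↦ by
        rw [h n i (mem_Icc.1 hi).1 (mem_Icc.1 hi).2 n.lt_succ_self]
    have row_below : ∑ i ∈ Icc 1 (n + 1),
        (((n + 1 : ℕ) : R) + 1 - 2 * i) * rowVelocity lam a b (n + 1) i =
          ∑ i ∈ Icc 1 n, ((n : R) + 1 - 2 * i) * (lam (n + 1) + b n i - a n i) +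
            ∑ i ∈ Icc 1 n, (a n i + b n i) :=
      sum_Icc_one_succ_antisymm_mul n (lam (n + 1)) (a n) (b n)
    rw [row_below, ← row_above, ← ih fun m i hi him hm ↦ h m i hi him (hm.trans n.lt_succ_self)]
    obtain rfl | hn := n.eq_zero_or_pos
    · simp
    · exact sum_Ico_succ_top hn _

end WeightedRows

/-- The weight `e^{x^{m+1}_{i+1} - x^m_i}` through which `x^m_i` interacts with its lower right
neighbour. -/
noncomputable def diagWeight (X : ℕ → ℕ → ℝ) (m i : ℕ) : ℝ :=
  Real.exp (X (m + 1) (i + 1) - X m i)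

/-- The weight `e^{x^m_i - x^{m+1}_i}` through which `x^m_i` interacts with its lower left
neighbour. -/
noncomputable def colWeight (X : ℕ → ℕ → ℝ) (m i : ℕ) : ℝ :=
  Real.exp (X m i - X (m + 1) i)

lemma colWeight_pred {X : ℕ → ℕ → ℝ} {m : ℕ} (hm : 1 ≤ m) (i : ℕ) :
    colWeight X (m - 1) i = Real.exp (X (m - 1) i - X m i) := by
  rw [colWeight, Nat.sub_add_cancel hm]

lemma diagWeight_pred_pred {X : ℕ → ℕ → ℝ} {m i : ℕ} (hm : 1 ≤ m) (hi : 1 ≤ i) :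
    diagWeight X (m - 1) (i - 1) = Real.exp (X m i - X (m - 1) (i - 1)) := by
  rw [diagWeight, Nat.sub_add_cancel hm, Nat.sub_add_cancel hi]

lemma rowVelocity_diagWeight_colWeight (lam : ℕ → ℝ) (X : ℕ → ℕ → ℝ) {m i : ℕ}
    (hi : 1 ≤ i) (him : i ≤ m) :
    rowVelocity lam (diagWeight X) (colWeight X) m i =
      lam m + (if i < m then Real.exp (X (m - 1) i - X m i) else 0) -
        (if 1 < i then Real.exp (X m i - X (m - 1) (i - 1)) else 0) := by
  rw [rowVelocity, colWeight_pred (hi.trans him), diagWeight_pred_pred (hi.trans him) hi]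

lemma inTlam.rowVelocity_eq {n : ℕ} {lam : ℕ → ℝ} {X : ℕ → ℕ → ℝ} (hX : inTlam n lam X)
    {m i : ℕ} (hi : 1 ≤ i) (him : i ≤ m) (hm : m < n) :
    rowVelocity lam (diagWeight X) (colWeight X) m i =
      lam (m + 1) + colWeight X m i - diagWeight X m i := by
  have balance := hX m i hi him hm
  rw [rowVelocity_diagWeight_colWeight lam X hi him, colWeight, diagWeight]
  obtain rfl | one_lt := hi.eq_or_lt <;> obtain rfl | lt_m := him.eq_or_lt <;>
    simp_all only [lt_irrefl, if_true, if_false] <;> linarith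

/-- (Givental-type formula.) For `X ∈ T_λ`,
`F(X) = Σ_{1≤i≤m<n} (e^{x^{m+1}_{i+1}−x^m_i} + e^{x^m_i−x^{m+1}_i})`
equals `(n−1)v_1 + (n−3)v_2 + ⋯ + (1−n)v_n`, where `v` is the (dyn) velocity of
the bottom row. -/
theorem stmt11 (n : ℕ) (hn : 2 ≤ n) (lam : ℕ → ℝ) (X : ℕ → ℕ → ℝ)
    (hX : inTlam n lam X) (v : ℕ → ℝ)
    (hv1 : v 1 = lam n + Real.exp (X (n - 1) 1 - X n 1))
    (hvn : v n = lam n - Real.exp (X n n - X (n - 1) (n - 1)))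
    (hvi : ∀ i, 1 < i → i < n →
      v i = lam n + Real.exp (X (n - 1) i - X n i)
        - Real.exp (X n i - X (n - 1) (i - 1))) :
    ∑ m ∈ Finset.Ico 1 n, ∑ i ∈ Finset.Icc 1 m,
      (Real.exp (X (m + 1) (i + 1) - X m i) + Real.exp (X m i - X (m + 1) i)) =
    ∑ i ∈ Finset.Icc 1 n, ((n : ℝ) + 1 - 2 * (i : ℝ)) * v i := by
  have velocity_eq (i : ℕ) (hi : i ∈ Icc 1 n) :
      v i = rowVelocity lam (diagWeight X) (colWeight X) n i := by
    obtain ⟨one_le, le_n⟩ := mem_Icc.1 hi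
    rw [rowVelocity_diagWeight_colWeight lam X one_le le_n]
    obtain rfl | one_lt := one_le.eq_or_lt
    · simp [hv1, show 1 < n from hn]
    obtain rfl | lt_n := le_n.eq_or_lt
    · simp [hvn, one_lt]
    · simp [hvi i one_lt lt_n, one_lt, lt_n]
  calc
    _ = ∑ i ∈ Icc 1 n, ((n : ℝ) + 1 - 2 * i) *
          rowVelocity lam (diagWeight X) (colWeight X) n i :=
      sum_weights_eq_sum_mul_rowVelocity fun _ _ ↦ hX.rowVelocity_eq
    _ = ∑ i ∈ Icc 1 n, ((n : ℝ) + 1 - 2 * i) * v i :=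
      sum_congr rfl fun i hi ↦ by rw [velocity_eq i hi]
end

section
/- For all integers 1 ≤ k ≤ n, det[ C(n−i, k−j) ]_{i,j=1,…,k} = 1, where C(a,b) denotes the binomial coefficient, with the convention C(a,b) = 0 when b > a. -/
/-!
Reversing rows and columns turns the matrix into `[C(m + i, j)]` with `m = n - k`, and its `i`-th
row lists the coefficients of the power series `(1 + X) ^ i * (1 + X) ^ m`. Multiplying the series
of all rows by a fixed series `f` multiplies the coefficient matrix on the right by the matrix of
`f, X * f, X ^ 2 * f, …`, which is upper triangular with constant diagonal `f(0)`. Hence the factor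
`(1 + X) ^ m` does not change the determinant, and what remains is the unitriangular Pascal matrix
`[C(i, j)]`. The exponent `m` may be any element of a binomial ring.
-/

open Matrix PowerSeries

theorem coeff_mul_eq_sum_fin {R : Type*} [Semiring R] {k : ℕ} (p f : R⟦X⟧) (j : Fin k) :
    coeff j (p * f) = ∑ l : Fin k, coeff l p * coeff j (X ^ (l : ℕ) * f) := by
  have hj : Finset.range (j + 1) ⊆ Finset.range k := Finset.range_mono j.isLt
  rw [Fin.sum_univ_eq_sum_range (fun l => coeff l p * coeff j (X ^ l * f)), coeff_mul,
    Finset.Nat.sum_antidiagonal_eq_sum_range_succ_mk, ← Finset.sum_subset hj]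
  · refine Finset.sum_congr rfl fun l hl => ?_
    rw [coeff_X_pow_mul', if_pos (Finset.mem_range_succ_iff.mp hl)]
  · intro l _ hl
    rw [coeff_X_pow_mul', if_neg (mt Finset.mem_range_succ_iff.mpr hl), mul_zero]

section CommRing

variable {R : Type*} [CommRing R]

theorem det_coeff_X_pow_mul (k : ℕ) (f : R⟦X⟧) :
    det (of fun i j : Fin k => coeff j (X ^ (i : ℕ) * f)) = constantCoeff f ^ k := by
  rw [det_of_isUpperTriangular]
  · simp [coeff_X_pow_mul']
  · intro i j hji
    exact (coeff_X_pow_mul' f i j).trans (if_neg (not_le.mpr hji))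

theorem det_coeff_mul_right {k : ℕ} (p : Fin k → R⟦X⟧) (f : R⟦X⟧) :
    det (of fun i j : Fin k => coeff j (p i * f)) =
      det (of fun i j : Fin k => coeff j (p i)) * constantCoeff f ^ k := by
  rw [← det_coeff_X_pow_mul, ← det_mul]
  congr 1
  ext i j
  exact coeff_mul_eq_sum_fin (p i) f j

theorem det_natCast_choose (k : ℕ) :
    det (of fun i j : Fin k => ((i : ℕ).choose j : R)) = 1 := by
  rw [det_of_isLowerTriangular]
  · simp
  · intro i j hij
    have hlt : (i : ℕ) < j := hij
    simp [Nat.choose_eq_zero_of_lt hlt]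

theorem det_ringChoose_add_natCast [BinomialRing R] (k : ℕ) (r : R) :
    det (of fun i j : Fin k => Ring.choose (r + (i : ℕ)) (j : ℕ)) = 1 := by
  calc det (of fun i j : Fin k => Ring.choose (r + (i : ℕ)) (j : ℕ))
    _ = det (of fun i j : Fin k =>
          coeff j (binomialSeries R ((i : ℕ) : R) * binomialSeries R r)) := by
      simp only [← binomialSeries_add, binomialSeries_coeff, smul_eq_mul, mul_one, add_comm]
    _ = det (of fun i j : Fin k => coeff j (binomialSeries R ((i : ℕ) : R))) := by
      rw [det_coeff_mul_right, binomialSeries_constantCoeff, one_pow, mul_one]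
    _ = det (of fun i j : Fin k => ((i : ℕ).choose j : R)) := by
      simp only [binomialSeries_coeff, Ring.choose_natCast, smul_eq_mul, mul_one]
    _ = 1 := det_natCast_choose k

end CommRing

/-- (Gessel–Viennot.) For `1 ≤ k ≤ n`,
`det[ C(n−i, k−j) ]_{i,j=1,…,k} = 1`, with `C(a,b) = 0` when `b > a`. -/
theorem stmt16 (n k : ℕ) (hk : 1 ≤ k) (hkn : k ≤ n) :
    Matrix.det (Matrix.of fun i j : Fin k =>
      ((n - 1 - (i : ℕ)).choose (k - 1 - (j : ℕ)) : ℤ)) = 1 := by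
  rw [← det_submatrix_equiv_self Fin.revPerm, ← det_ringChoose_add_natCast k ((n - k : ℕ) : ℤ)]
  congr 1
  ext i j
  have hrow : n - 1 - (i.rev : ℕ) = n - k + i := by rw [Fin.val_rev]; lia
  have hcol : k - 1 - (j.rev : ℕ) = j := by rw [Fin.val_rev]; lia
  simp only [submatrix_apply, of_apply, Fin.revPerm_apply, hrow, hcol, ← Nat.cast_add,
    Ring.choose_natCast]
end
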